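/- arXiv:1701.02675 — 2 statements merged into one kernel-verified Lean document; each statement's English description precedes it below -/
import Mathlib

section
/- Let 0 < b < 1, p > 0, and let u₂ be the characteristic function of the closed ellipse pE^{b,0} = { (x₁,x₂) : (x₁/p)² + (x₂/(pb))² ≤ 1 }, with pE^{b,0} ⊂ Ω. Then for every a ∈ (0,1], with orientation angle θ = 0, DTV^{a,0}(u₂) = p ∫₀^{2π} ( b² cos²τ + a² sin²τ )^{1/2} dτ. -/
open MeasureTheory Filter
open scoped ENNReal Topology Pointwise

noncomputable section

abbrev E2 := EuclideanSpace ℝ (Fin 2)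

/-- Build a vector of `ℝ²` from its coordinates. -/
def vec2 (x y : ℝ) : E2 := (WithLp.equiv 2 (Fin 2 → ℝ)).symm ![x, y]

/-- The elliptical set `E^{a,θ}`. -/
def Ellip (a θ : ℝ) : Set E2 :=
  {x : E2 | (x 0 * Real.cos θ + x 1 * Real.sin θ) ^ 2 +
      ((-(x 0) * Real.sin θ + x 1 * Real.cos θ) / a) ^ 2 ≤ 1}

/-- Partial derivative in the `i`-th coordinate direction. -/
def pd (i : Fin 2) (f : E2 → ℝ) (x : E2) : ℝ :=
  fderiv ℝ f x (EuclideanSpace.single i 1)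

/-- Divergence of a vector field on `ℝ²`. -/
def divVec (v : E2 → E2) (x : E2) : ℝ :=
  pd 0 (fun y => v y 0) x + pd 1 (fun y => v y 1) x

/-- `C¹` vector fields compactly supported in `Ω`. -/
def Cc1 (Ω : Set E2) (v : E2 → E2) : Prop :=
  ContDiff ℝ 1 v ∧ HasCompactSupport v ∧ tsupport v ⊆ Ω

/-- The directional total variation `DTV^{a,θ}`. -/
def DTV (Ω : Set E2) (a θ : ℝ) (u : E2 → ℝ) : ℝ≥0∞ :=
  ⨆ v ∈ {v : E2 → E2 | Cc1 Ω v ∧ ∀ x ∈ Ω, v x ∈ Ellip a θ},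
    ENNReal.ofReal (∫ x in Ω, u x * divVec v x)

/-- The total variation. -/
def TV (Ω : Set E2) (u : E2 → ℝ) : ℝ≥0∞ :=
  ⨆ v ∈ {v : E2 → E2 | Cc1 Ω v ∧ ∀ x ∈ Ω, ‖v x‖ ≤ 1},
    ENNReal.ofReal (∫ x in Ω, u x * divVec v x)

abbrev Mat2 := Matrix (Fin 2) (Fin 2) ℝ

/-- The rotation matrix `R_θ`. -/
def Rmat (θ : ℝ) : Mat2 := !![Real.cos θ, -Real.sin θ; Real.sin θ, Real.cos θ]

/-- The matrix `Λ_a = diag(1,a)`. -/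
def Lmat (a : ℝ) : Mat2 := !![1, 0; 0, a]

/-- Symmetric `2×2` matrices whose rows and columns lie in `S ⊆ ℝ²`. -/
def rowcol (S : Set E2) : Set Mat2 :=
  {V : Mat2 | V.IsSymm ∧ (∀ i : Fin 2, vec2 (V i 0) (V i 1) ∈ S) ∧
    ∀ j : Fin 2, vec2 (V 0 j) (V 1 j) ∈ S}

/-- `E^{a,θ}_{2×2}`. -/
def EllipM (a θ : ℝ) : Set Mat2 := rowcol (Ellip a θ)

/-- `B_{2×2}`. -/
def BallM : Set Mat2 := rowcol (Metric.closedBall 0 1)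

/-- Divergence of a (symmetric) matrix field. -/
def divMat (W : E2 → Mat2) (x : E2) : E2 :=
  vec2 (pd 0 (fun y => W y 0 0) x + pd 1 (fun y => W y 0 1) x)
    (pd 0 (fun y => W y 1 0) x + pd 1 (fun y => W y 1 1) x)

/-- Second-order divergence of a matrix field. -/
def div2Mat (W : E2 → Mat2) (x : E2) : ℝ :=
  pd 0 (pd 0 (fun y => W y 0 0)) x + pd 1 (pd 1 (fun y => W y 1 1)) x +
    2 * pd 0 (pd 1 (fun y => W y 0 1)) x

/-- `C²` symmetric-matrix fields compactly supported in `Ω`. -/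
def Cc2Sym (Ω : Set E2) (W : E2 → Mat2) : Prop :=
  (∀ i j : Fin 2, ContDiff ℝ 2 (fun x => W x i j)) ∧ HasCompactSupport W ∧
    tsupport W ⊆ Ω ∧ ∀ x, (W x).IsSymm

/-- The second-order directional total generalized variation `DTGV²_λ`. -/
def DTGV2 (Ω : Set E2) (a θ l0 l1 : ℝ) (u : E2 → ℝ) : ℝ≥0∞ :=
  ⨆ W ∈ {W : E2 → Mat2 | Cc2Sym Ω W ∧ (∀ x ∈ Ω, W x ∈ l0 • EllipM a θ) ∧
      ∀ x ∈ Ω, divMat W x ∈ l1 • Ellip a θ},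
    ENNReal.ofReal (∫ x in Ω, u x * div2Mat W x)

/-- The second-order total generalized variation `TGV²_λ`. -/
def TGV2 (Ω : Set E2) (l0 l1 : ℝ) (u : E2 → ℝ) : ℝ≥0∞ :=
  ⨆ W ∈ {W : E2 → Mat2 | Cc2Sym Ω W ∧ (∀ x ∈ Ω, W x ∈ l0 • BallM) ∧
      ∀ x ∈ Ω, divMat W x ∈ Metric.closedBall 0 l1},
    ENNReal.ofReal (∫ x in Ω, u x * div2Mat W x)

/-- The closed ellipse `pE^{b,0}` with semi-axes `p` and `pb`. -/
def pEllipse (p b : ℝ) : Set E2 := {x : E2 | (x 0 / p) ^ 2 + (x 1 / (p * b)) ^ 2 ≤ 1}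

lemma vec2_zero (x y : ℝ) : vec2 x y 0 = x := rfl
lemma vec2_one (x y : ℝ) : vec2 x y 1 = y := rfl

lemma vec2_eq (x y : ℝ) :
    vec2 x y = x • EuclideanSpace.single (0 : Fin 2) (1 : ℝ) +
      y • EuclideanSpace.single (1 : Fin 2) (1 : ℝ) := by
  ext i
  fin_cases i <;> simp [vec2]

lemma vec2_contDiff {E : Type*} [NormedAddCommGroup E] [NormedSpace ℝ E] {f g : E → ℝ}
    (hf : ContDiff ℝ 1 f) (hg : ContDiff ℝ 1 g) : ContDiff ℝ 1 (fun z => vec2 (f z) (g z)) := by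
  simp only [vec2_eq]
  fun_prop

lemma vec2_measurePreserving :
    MeasurePreserving (fun z : ℝ × ℝ => vec2 z.1 z.2) volume volume := by
  have h1 := (volume_preserving_finTwoArrow ℝ).symm
  have h2 := PiLp.volume_preserving_toLp (Fin 2)
  exact h2.comp h1

lemma vec2_measurableEmbedding :
    MeasurableEmbedding (fun z : ℝ × ℝ => vec2 z.1 z.2) := by
  have h1 := (MeasurableEquiv.finTwoArrow (α := ℝ)).symm.measurableEmbedding
  have h2 := (MeasurableEquiv.toLp 2 (Fin 2 → ℝ)).measurableEmbedding
  exact h2.comp h1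

lemma scale_integral (s t : ℝ) (hs : 0 < s) (ht : 0 < t) (G : ℝ × ℝ → ℝ) :
    ∫ z, G z = (s * t) * ∫ z : ℝ × ℝ, G (s * z.1, t * z.2) := by
  let L : (ℝ × ℝ) →ₗ[ℝ] (ℝ × ℝ) := LinearMap.prodMap (s • LinearMap.id) (t • LinearMap.id)
  have hdet : LinearMap.det L = s * t := by
    simp [L, LinearMap.det_prodMap]
  have hd0 : LinearMap.det L ≠ 0 := by rw [hdet]; positivity
  have hmap := Measure.map_linearMap_addHaar_eq_smul_addHaar (volume : Measure (ℝ × ℝ)) hd0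
  have hemb : MeasurableEmbedding L := by
    have : IsUnit (LinearMap.det L) := hd0.isUnit
    exact (LinearEquiv.ofIsUnitDet (f := L) (v := Module.finBasis ℝ (ℝ × ℝ)) (v' := Module.finBasis ℝ (ℝ × ℝ)) (by simpa using this)).toContinuousLinearEquiv.toHomeomorph.measurableEmbedding
  have h := hemb.integral_map (μ := volume) G
  rw [hmap, integral_smul_measure, hdet, abs_inv, abs_of_pos (by positivity : 0 < s * t),
    ENNReal.toReal_ofReal (by positivity)] at h
  have h' : ∫ z : ℝ × ℝ, G (s * z.1, t * z.2) = (s * t)⁻¹ • ∫ z, G z := by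
    rw [h]; rfl
  rw [h', smul_eq_mul]
  field_simp

lemma fderiv_vec2 (f : E2 → ℝ) (x : E2) (s t : ℝ) :
    fderiv ℝ f x (vec2 s t) = s * pd 0 f x + t * pd 1 f x := by
  rw [vec2_eq, map_add, map_smul, map_smul]; rfl

lemma pEllipse_isClosed (p b : ℝ) : IsClosed (pEllipse p b) := by
  unfold pEllipse
  refine isClosed_le ?_ continuous_const
  fun_prop

lemma pd_continuous (i : Fin 2) {f : E2 → ℝ} (hf : ContDiff ℝ 1 f) : Continuous (pd i f) := by
  unfold pd
  exact (hf.continuous_fderiv (by norm_num)).clm_apply continuous_const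

lemma comp_contDiff {v : E2 → E2} (hv : ContDiff ℝ 1 v) (i : Fin 2) :
    ContDiff ℝ 1 (fun y => v y i) := by
  fun_prop

lemma divVec_continuous {v : E2 → E2} (hv : ContDiff ℝ 1 v) : Continuous (divVec v) := by
  unfold divVec
  exact (pd_continuous 0 (comp_contDiff hv 0)).add (pd_continuous 1 (comp_contDiff hv 1))

lemma fderiv_dir1 {B : ℝ × ℝ → ℝ} {z : ℝ × ℝ} (hB : DifferentiableAt ℝ B z) {d : ℝ}
    (h : HasDerivAt (fun r => B (r, z.2)) d z.1) : fderiv ℝ B z (1, 0) = d := by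
  have h1 : HasDerivAt (fun r : ℝ => (r, z.2)) ((1 : ℝ), (0 : ℝ)) z.1 :=
    (hasDerivAt_id z.1).prodMk (hasDerivAt_const _ _)
  have h2 : HasDerivAt (fun r => B (r, z.2)) (fderiv ℝ B z (1, 0)) z.1 :=
    HasFDerivAt.comp_hasDerivAt (f := fun r : ℝ => (r, z.2)) z.1 hB.hasFDerivAt h1
  exact h2.unique h

lemma fderiv_dir2 {B : ℝ × ℝ → ℝ} {z : ℝ × ℝ} (hB : DifferentiableAt ℝ B z) {d : ℝ}
    (h : HasDerivAt (fun r => B (z.1, r)) d z.2) : fderiv ℝ B z (0, 1) = d := by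
  have h1 : HasDerivAt (fun r : ℝ => (z.1, r)) ((0 : ℝ), (1 : ℝ)) z.2 :=
    (hasDerivAt_const _ _).prodMk (hasDerivAt_id z.2)
  have h2 : HasDerivAt (fun r => B (z.1, r)) (fderiv ℝ B z (0, 1)) z.2 :=
    HasFDerivAt.comp_hasDerivAt (f := fun r : ℝ => (z.1, r)) z.2 hB.hasFDerivAt h1
  exact h2.unique h

lemma hasDerivAt_comp_vec2 {f : E2 → ℝ} (hf : ContDiff ℝ 1 f) {α β : ℝ → ℝ} {α' β' t : ℝ}
    (hα : HasDerivAt α α' t) (hβ : HasDerivAt β β' t) :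
    HasDerivAt (fun r => f (vec2 (α r) (β r)))
      (α' * pd 0 f (vec2 (α t) (β t)) + β' * pd 1 f (vec2 (α t) (β t))) t := by
  rw [← fderiv_vec2]
  have h1 : HasDerivAt (fun r => vec2 (α r) (β r)) (vec2 α' β') t := by
    simp only [vec2_eq]
    exact (hα.smul_const _).add (hβ.smul_const _)
  exact HasFDerivAt.comp_hasDerivAt (f := fun r => vec2 (α r) (β r)) t
    ((hf.differentiable (by norm_num)) _).hasFDerivAt h1

/-- Divergence theorem in elliptic polar coordinates. -/
lemma polar_divergence (p b : ℝ) {v : E2 → E2} (hv : ContDiff ℝ 1 v) :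
    ∫ z in Set.Icc ((0 : ℝ), -Real.pi) (1, Real.pi),
      (p * (p * b)) * (z.1 * divVec v (vec2 (p * (z.1 * Real.cos z.2)) (p * b * (z.1 * Real.sin z.2))))
    = ∫ τ in (-Real.pi)..Real.pi, p * (b * Real.cos τ * v (vec2 (p * Real.cos τ) (p * b * Real.sin τ)) 0
        + Real.sin τ * v (vec2 (p * Real.cos τ) (p * b * Real.sin τ)) 1) := by
  set q : ℝ × ℝ → E2 := fun z => vec2 (p * (z.1 * Real.cos z.2)) (p * b * (z.1 * Real.sin z.2)) with hq
  have hqc : ContDiff ℝ 1 q := by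
    apply vec2_contDiff <;> fun_prop
  have h0 := comp_contDiff hv 0
  have h1 := comp_contDiff hv 1
  set B : ℝ × ℝ → ℝ := fun z =>
    z.1 * p * (b * Real.cos z.2 * v (q z) 0 + Real.sin z.2 * v (q z) 1) with hB
  set A : ℝ × ℝ → ℝ := fun z =>
    p * Real.cos z.2 * v (q z) 1 - p * b * Real.sin z.2 * v (q z) 0 with hA
  have hq0 : ContDiff ℝ 1 (fun z => v (q z) 0) := h0.comp hqc
  have hq1 : ContDiff ℝ 1 (fun z => v (q z) 1) := h1.comp hqc
  have hBc : ContDiff ℝ 1 B := by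
    have hs : ContDiff ℝ 1 (fun z : ℝ × ℝ => Real.sin z.2) := by fun_prop
    have hc : ContDiff ℝ 1 (fun z : ℝ × ℝ => Real.cos z.2) := by fun_prop
    exact (contDiff_fst.mul contDiff_const).mul
      (((contDiff_const.mul hc).mul hq0).add (hs.mul hq1))
  have hAc : ContDiff ℝ 1 A := by
    have hs : ContDiff ℝ 1 (fun z : ℝ × ℝ => Real.sin z.2) := by fun_prop
    have hc : ContDiff ℝ 1 (fun z : ℝ × ℝ => Real.cos z.2) := by fun_prop
    exact ((contDiff_const.mul hc).mul hq1).sub ((contDiff_const.mul hs).mul hq0)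
  have key : ∀ z, fderiv ℝ B z (1, 0) + fderiv ℝ A z (0, 1)
      = (p * (p * b)) * (z.1 * divVec v (q z)) := by
    rintro ⟨r, τ⟩
    have hr1 : HasDerivAt (fun r : ℝ => p * (r * Real.cos τ)) (p * Real.cos τ) r := by
      simpa using ((hasDerivAt_id r).mul_const (Real.cos τ)).const_mul p
    have hr2 : HasDerivAt (fun r : ℝ => p * b * (r * Real.sin τ)) (p * b * Real.sin τ) r := by
      simpa using ((hasDerivAt_id r).mul_const (Real.sin τ)).const_mul (p * b)
    have ht1 : HasDerivAt (fun τ : ℝ => p * (r * Real.cos τ)) (p * (r * (- Real.sin τ))) τ :=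
      ((Real.hasDerivAt_cos τ).const_mul r).const_mul p
    have ht2 : HasDerivAt (fun τ : ℝ => p * b * (r * Real.sin τ)) (p * b * (r * Real.cos τ)) τ :=
      ((Real.hasDerivAt_sin τ).const_mul r).const_mul (p * b)
    have e0 := hasDerivAt_comp_vec2 h0 hr1 hr2
    have e1 := hasDerivAt_comp_vec2 h1 hr1 hr2
    have f0 := hasDerivAt_comp_vec2 h0 ht1 ht2
    have f1 := hasDerivAt_comp_vec2 h1 ht1 ht2
    have dB := ((hasDerivAt_id r).mul_const p).mul
      ((e0.const_mul (b * Real.cos τ)).add (e1.const_mul (Real.sin τ)))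
    have dA := (((Real.hasDerivAt_cos τ).const_mul p).mul f1).sub
      (((Real.hasDerivAt_sin τ).const_mul (p * b)).mul f0)
    have gB := fderiv_dir1 (B := B) (z := (r, τ)) (hBc.differentiable (by norm_num) _) dB
    have gA := fderiv_dir2 (B := A) (z := (r, τ)) (hAc.differentiable (by norm_num) _) dA
    rw [gB, gA]
    clear gB gA dB dA e0 e1 f0 f1
    simp only [divVec, hq, Pi.add_apply, id]
    have := Real.sin_sq_add_cos_sq τ
    generalize pd 0 (fun y => v y 0) _ = a00
    generalize pd 1 (fun y => v y 0) _ = a10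
    generalize pd 0 (fun y => v y 1) _ = a01
    generalize pd 1 (fun y => v y 1) _ = a11
    linear_combination (p * (p * b) * r * (a00 + a11)) * this
  have hdiv := integral_divergence_prod_Icc_of_hasFDerivAt_of_le B A (fderiv ℝ B) (fderiv ℝ A)
    (0, -Real.pi) (1, Real.pi) ⟨by simp, by simp; linarith [Real.pi_pos]⟩
    hBc.continuous.continuousOn hAc.continuous.continuousOn
    (fun x _ => (hBc.differentiable (by norm_num) x).hasFDerivAt)
    (fun x _ => (hAc.differentiable (by norm_num) x).hasFDerivAt)
    (by
      simp only [key]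
      apply Continuous.integrableOn_Icc
      exact continuous_const.mul (continuous_fst.mul ((divVec_continuous hv).comp hqc.continuous)))
  simp only [key] at hdiv
  rw [hdiv]
  simp [hA, hB, hq]

lemma green_ellipse (p b : ℝ) (hp : 0 < p) (hb : 0 < b) {v : E2 → E2} (hv : ContDiff ℝ 1 v) :
    ∫ x in pEllipse p b, divVec v x
    = ∫ τ in (-Real.pi)..Real.pi, p * (b * Real.cos τ * v (vec2 (p * Real.cos τ) (p * b * Real.sin τ)) 0
        + Real.sin τ * v (vec2 (p * Real.cos τ) (p * b * Real.sin τ)) 1) := by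
  rw [← polar_divergence p b hv, ← integral_indicator (pEllipse_isClosed p b).measurableSet,
    ← vec2_measurePreserving.integral_comp vec2_measurableEmbedding,
    scale_integral p (p * b) hp (by positivity), ← integral_comp_polarCoord_symm,
    integral_const_mul]
  congr 1
  have hae : (Set.Icc ((0 : ℝ), -Real.pi) (1, Real.pi)) =ᵐ[volume]
      (Set.Ioc (0:ℝ) 1 ×ˢ Set.Ioo (-Real.pi) Real.pi) := by
    rw [← Set.Icc_prod_Icc]
    exact Measure.set_prod_ae_eq Ioc_ae_eq_Icc.symm Ioo_ae_eq_Icc.symm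
  rw [setIntegral_congr_set hae]
  rw [← integral_indicator polarCoord.open_target.measurableSet,
    ← integral_indicator (measurableSet_Ioc.prod measurableSet_Ioo)]
  congr 1
  ext ⟨r, τ⟩
  have hmem : vec2 (p * (r * Real.cos τ)) (p * b * (r * Real.sin τ)) ∈ pEllipse p b ↔ r ^ 2 ≤ 1 := by
    simp only [pEllipse, Set.mem_ofPred_eq, vec2_zero, vec2_one]
    rw [mul_div_cancel_left₀ _ hp.ne', mul_div_cancel_left₀ _ (by positivity)]
    have := Real.sin_sq_add_cos_sq τ
    rw [show (r * Real.cos τ) ^ 2 + (r * Real.sin τ) ^ 2 = r ^ 2 by linear_combination r ^ 2 * this]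
  have hr : 0 < r → (r ^ 2 ≤ 1 ↔ r ≤ 1) := fun h => by
    constructor <;> intro h' <;> nlinarith
  by_cases h1 : 0 < r <;> by_cases h2 : -Real.pi < τ ∧ τ < Real.pi <;> by_cases h3 : r ≤ 1 <;>
    simp [Set.indicator, polarCoord, hmem, h1, h2, h3, hr]

lemma ellip_cs {a : ℝ} (ha : 0 < a) {x y : ℝ} (h : x ^ 2 + (y / a) ^ 2 ≤ 1) (n m : ℝ) :
    n * x + m * y ≤ Real.sqrt (n ^ 2 + a ^ 2 * m ^ 2) := by
  apply Real.le_sqrt_of_sq_le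
  obtain ⟨w, rfl⟩ : ∃ w, y = a * w := ⟨y / a, by field_simp⟩
  rw [mul_div_cancel_left₀ _ ha.ne'] at h
  have h2 : 0 ≤ n ^ 2 + a ^ 2 * m ^ 2 := by positivity
  nlinarith [sq_nonneg (n * w - a * m * x), mul_nonneg h2 (sub_nonneg.2 h)]

lemma vec2_mem_boundary {p b : ℝ} (hp : 0 < p) (hb : 0 < b) (τ : ℝ) :
    vec2 (p * Real.cos τ) (p * b * Real.sin τ) ∈ pEllipse p b := by
  simp only [pEllipse, Set.mem_ofPred_eq, vec2_zero, vec2_one]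
  rw [mul_div_cancel_left₀ _ hp.ne', mul_div_cancel_left₀ _ (by positivity)]
  rw [Real.cos_sq_add_sin_sq]

lemma integral_eq {Ω : Set E2} {p b : ℝ} (hsub : pEllipse p b ⊆ Ω) (D : E2 → ℝ) :
    ∫ x in Ω, (pEllipse p b).indicator (fun _ => (1 : ℝ)) x * D x = ∫ x in pEllipse p b, D x := by
  have : (fun x => (pEllipse p b).indicator (fun _ => (1 : ℝ)) x * D x)
      = (pEllipse p b).indicator D := by
    ext x
    by_cases h : x ∈ pEllipse p b <;> simp [h]
  rw [this, setIntegral_indicator (pEllipse_isClosed p b).measurableSet,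
    Set.inter_eq_self_of_subset_right hsub]

lemma exists_cutoff {Ω : Set E2} (hΩo : IsOpen Ω) {K : Set E2} (hK : IsClosed K) (h : K ⊆ Ω) :
    ∃ χ : E2 → ℝ, ContDiff ℝ 1 χ ∧ tsupport χ ⊆ Ω ∧ (∀ x ∈ K, χ x = 1) ∧
      ∀ x, 0 ≤ χ x ∧ χ x ≤ 1 := by
  obtain ⟨f, h0, h1, hf⟩ := exists_contMDiffMap_zero_one_nhds_of_isClosed (n := 1)
    (modelWithCornersSelf ℝ E2) hΩo.isClosed_compl hK
    (Set.disjoint_left.2 fun x hx hx' => hx (h hx'))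
  refine ⟨f, f.contMDiff.contDiff, ?_, fun x hx => h1.self_of_nhdsSet x hx, hf⟩
  intro x hx
  by_contra hn
  have : f =ᶠ[𝓝 x] 0 := (eventually_nhdsSet_iff_forall.1 h0) x hn
  exact (notMem_tsupport_iff_eventuallyEq.2 this) hx

lemma target_integral (a b p : ℝ) :
    p * ∫ τ in (0:ℝ)..(2 * Real.pi),
        Real.sqrt (b ^ 2 * Real.cos τ ^ 2 + a ^ 2 * Real.sin τ ^ 2) =
    ∫ τ in (-Real.pi)..Real.pi,
        p * Real.sqrt (b ^ 2 * Real.cos τ ^ 2 + a ^ 2 * Real.sin τ ^ 2) := by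
  rw [intervalIntegral.integral_const_mul]
  congr 1
  have hper : Function.Periodic
      (fun τ => Real.sqrt (b ^ 2 * Real.cos τ ^ 2 + a ^ 2 * Real.sin τ ^ 2)) (2 * Real.pi) := by
    intro τ
    simp [Real.cos_add_two_pi, Real.sin_add_two_pi]
  have := hper.intervalIntegral_add_eq 0 (-Real.pi)
  rwa [zero_add, show -Real.pi + 2 * Real.pi = Real.pi by ring] at this

lemma exists_optimal {Ω : Set E2} (hΩo : IsOpen Ω) (hΩb : Bornology.IsBounded Ω)
    {a b p : ℝ} (ha : 0 < a) (hb : 0 < b) (hp : 0 < p) (hsub : pEllipse p b ⊆ Ω) :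
    ∃ v : E2 → E2, Cc1 Ω v ∧ (∀ x ∈ Ω, v x ∈ Ellip a 0) ∧
      ∀ τ : ℝ, b * Real.cos τ * v (vec2 (p * Real.cos τ) (p * b * Real.sin τ)) 0
        + Real.sin τ * v (vec2 (p * Real.cos τ) (p * b * Real.sin τ)) 1 =
        Real.sqrt (b ^ 2 * Real.cos τ ^ 2 + a ^ 2 * Real.sin τ ^ 2) := by
  obtain ⟨χ, hχ, hχs, hχ1, hχ01⟩ := exists_cutoff hΩo (pEllipse_isClosed p b) hsub
  set N : E2 → ℝ := fun x => (b * (x 0 / p)) ^ 2 + (a * (x 1 / (p * b))) ^ 2 with hN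
  set M : E2 → ℝ := fun x => N x + (1 - (x 0 / p) ^ 2 - (x 1 / (p * b)) ^ 2) ^ 2 with hM
  have hMpos : ∀ x, 0 < M x := by
    intro x
    simp only [hM, hN]
    by_cases h0 : x 0 / p = 0
    · by_cases h1 : x 1 / (p * b) = 0
      · simp [h0, h1]
      · positivity
    · positivity
  have hMc : ContDiff ℝ 1 M := by
    simp only [hM, hN]
    fun_prop
  have hS : ContDiff ℝ 1 (fun x => (Real.sqrt (M x))⁻¹) :=
    (hMc.sqrt fun x => (hMpos x).ne').inv fun x => (Real.sqrt_pos.2 (hMpos x)).ne'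
  set w : E2 → E2 := fun x => vec2 (b * (x 0 / p)) (a ^ 2 * (x 1 / (p * b))) with hw
  have hwc : ContDiff ℝ 1 w := by
    apply vec2_contDiff <;> fun_prop
  refine ⟨fun x => χ x • ((Real.sqrt (M x))⁻¹ • w x), ⟨hχ.smul (hS.smul hwc), ?_, ?_⟩, ?_, ?_⟩
  · have hc : HasCompactSupport χ :=
      Metric.isCompact_of_isClosed_isBounded (isClosed_tsupport χ) (hΩb.subset hχs)
    exact hc.smul_right
  · exact (closure_mono (Function.support_smul_subset_left _ _)).trans hχs
  · intro x _
    have hs := Real.sqrt_pos.2 (hMpos x)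
    have hsq := Real.sq_sqrt (hMpos x).le
    have hx := hχ01 x
    have hNM : N x ≤ M x := by simp only [hM]; nlinarith [sq_nonneg (1 - (x 0 / p) ^ 2 - (x 1 / (p * b)) ^ 2)]
    simp only [Ellip, Set.mem_ofPred_eq, Real.cos_zero, Real.sin_zero, PiLp.smul_apply, smul_eq_mul,
      hw, vec2_zero, vec2_one, mul_one, mul_zero, add_zero, zero_add]
    have e : (χ x * ((Real.sqrt (M x))⁻¹ * (b * (x 0 / p)))) ^ 2 +
        (χ x * ((Real.sqrt (M x))⁻¹ * (a ^ 2 * (x 1 / (p * b)))) / a) ^ 2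
        = χ x ^ 2 * (N x / M x) := by
      rw [show N x / M x = N x / Real.sqrt (M x) ^ 2 by rw [hsq]]
      simp only [hN]
      field_simp
    rw [e]
    have h1 : N x / M x ≤ 1 := (div_le_one (hMpos x)).2 hNM
    have h2 : 0 ≤ N x / M x := div_nonneg (by simp only [hN]; positivity) (hMpos x).le
    have h3 : χ x ^ 2 ≤ 1 := by nlinarith
    exact mul_le_one₀ h3 h2 h1
  · intro τ
    have hcs := Real.cos_sq_add_sin_sq τ
    have hmem := vec2_mem_boundary hp hb τ
    have hpb : p * b ≠ 0 := by positivity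
    have hMe : M (vec2 (p * Real.cos τ) (p * b * Real.sin τ)) =
        b ^ 2 * Real.cos τ ^ 2 + a ^ 2 * Real.sin τ ^ 2 := by
      simp only [hM, hN, vec2_zero, vec2_one, mul_div_cancel_left₀ _ hp.ne',
        mul_div_cancel_left₀ _ hpb]
      rw [show 1 - Real.cos τ ^ 2 - Real.sin τ ^ 2 = 0 by linarith]
      ring
    have hpos := hMpos (vec2 (p * Real.cos τ) (p * b * Real.sin τ))
    simp only [hχ1 _ hmem, hMe, PiLp.smul_apply, smul_eq_mul, hw, vec2_zero, vec2_one,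
      mul_div_cancel_left₀ _ hp.ne', mul_div_cancel_left₀ _ hpb, one_mul]
    rw [hMe] at hpos
    have hs := Real.sqrt_pos.2 hpos
    have hsq := Real.sq_sqrt hpos.le
    set S := Real.sqrt (b ^ 2 * Real.cos τ ^ 2 + a ^ 2 * Real.sin τ ^ 2)
    field_simp
    linear_combination -hsq

/-- `DTV^{a,0}` of the characteristic function of the ellipse `pE^{b,0}`. -/
theorem dtv_ellipse_theta_zero (Ω : Set E2) (hΩo : IsOpen Ω) (hΩb : Bornology.IsBounded Ω)
    (a b p : ℝ) (ha : 0 < a) (ha1 : a ≤ 1) (hb : 0 < b) (hb1 : b < 1) (hp : 0 < p)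
    (hsub : pEllipse p b ⊆ Ω) :
    DTV Ω a 0 ((pEllipse p b).indicator fun _ => (1 : ℝ)) =
      ENNReal.ofReal (p * ∫ τ in (0:ℝ)..(2 * Real.pi),
        Real.sqrt (b ^ 2 * Real.cos τ ^ 2 + a ^ 2 * Real.sin τ ^ 2)) := by
  rw [target_integral]
  apply le_antisymm
  · refine iSup₂_le fun v hv => ENNReal.ofReal_le_ofReal ?_
    obtain ⟨⟨hvc, -, -⟩, hvE⟩ := hv
    rw [integral_eq hsub, green_ellipse p b hp hb hvc]
    have hcont : Continuous fun τ : ℝ => vec2 (p * Real.cos τ) (p * b * Real.sin τ) := by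
      refine (vec2_contDiff ?_ ?_).continuous <;> fun_prop
    have c0 := (comp_contDiff hvc 0).continuous.comp hcont
    have c1 := (comp_contDiff hvc 1).continuous.comp hcont
    refine intervalIntegral.integral_mono_on (by linarith [Real.pi_pos]) ?_ ?_ ?_
    · apply Continuous.intervalIntegrable
      exact continuous_const.mul (((continuous_const.mul Real.continuous_cos).mul c0).add
        (Real.continuous_sin.mul c1))
    · apply Continuous.intervalIntegrable
      fun_prop
    · intro τ _
      have hm := hvE _ (hsub (vec2_mem_boundary hp hb τ))
      simp only [Ellip, Set.mem_ofPred_eq, Real.cos_zero, Real.sin_zero, mul_one, mul_zero,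
        add_zero, zero_add] at hm
      have h := ellip_cs ha hm (b * Real.cos τ) (Real.sin τ)
      rw [mul_pow] at h
      exact mul_le_mul_of_nonneg_left h hp.le
  · obtain ⟨v, hv, hvE, hτ⟩ := exists_optimal hΩo hΩb ha hb hp hsub
    refine le_iSup₂_of_le v ⟨hv, hvE⟩ (le_of_eq ?_)
    rw [integral_eq hsub, green_ellipse p b hp hb hv.1]
    simp only [hτ]
end
end

section
/- Kernel of DTGV² (Corollary 4.3 for order 2): for u ∈ L¹(Ω) with Ω connected, DTGV²_λ(u) = 0 if and only if u agrees almost everywhere on Ω with a polynomial of degree less than 2, i.e. an affine function x ↦ c₀ + c₁x₁ + c₂x₂. -/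
open MeasureTheory Filter
open scoped ENNReal Topology Pointwise

noncomputable section

/-! ### Basic facts on partial derivatives -/

lemma pd_contDiff {f : E2 → ℝ} {n m : WithTop ℕ∞} (hf : ContDiff ℝ n f) (h : m + 1 ≤ n) (i : Fin 2) :
    ContDiff ℝ m (pd i f) := by
  unfold pd
  exact (hf.fderiv_right h).clm_apply contDiff_const

lemma pd_compact {f : E2 → ℝ} (hf : HasCompactSupport f) (i : Fin 2) :
    HasCompactSupport (pd i f) := hf.fderiv_apply ℝ _

lemma pd_tsupport (f : E2 → ℝ) (i : Fin 2) : tsupport (pd i f) ⊆ tsupport f :=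
  tsupport_fderiv_apply_subset ℝ _

lemma pd_const_mul (c : ℝ) (f : E2 → ℝ) (i : Fin 2) :
    pd i (fun x => c * f x) = fun x => c * pd i f x := by
  funext x
  unfold pd
  have : (fun x => c * f x) = c • f := rfl
  rw [this, fderiv_const_smul_field]
  rfl

lemma pd_comm {f : E2 → ℝ} (hf : ContDiff ℝ 2 f) (i j : Fin 2) : pd i (pd j f) = pd j (pd i f) := by
  have key : ∀ (i j : Fin 2) (x : E2), pd i (pd j f) x =
      fderiv ℝ (fderiv ℝ f) x (EuclideanSpace.single i 1) (EuclideanSpace.single j 1) := by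
    intro i j x
    have hd : DifferentiableAt ℝ (fderiv ℝ f) x :=
      ((hf.fderiv_right (m := 1) (by norm_num)).differentiable (by norm_num)) x
    have : pd j f = fun y => fderiv ℝ f y (EuclideanSpace.single j 1) := rfl
    rw [this]
    unfold pd
    rw [fderiv_clm_apply hd (differentiableAt_const _)]
    simp
  funext x
  rw [key, key]
  exact (hf.contDiffAt.isSymmSndFDerivAt (by simp)).eq _ _

lemma pd_sub_left {f : E2 → ℝ} (hf : Differentiable ℝ f) (x : E2) (i : Fin 2) :
    pd i (fun t => f (x - t)) = fun t => -1 * pd i f (x - t) := by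
  funext t
  unfold pd
  have h1 : HasFDerivAt (fun t : E2 => x - t) (-ContinuousLinearMap.id ℝ E2) t :=
    (hasFDerivAt_id t).const_sub x
  have h2 := (hf (x - t)).hasFDerivAt.comp t h1
  have h3 : fderiv ℝ (fun t => f (x - t)) t = _ := h2.fderiv
  rw [h3]
  simp

lemma fderiv_eq_zero_of_pd {f : E2 → ℝ} {x : E2} (h : ∀ i, pd i f x = 0) : fderiv ℝ f x = 0 := by
  have h0 := h 0
  have h1 := h 1
  unfold pd at h0 h1
  ext v
  have hv : v = v 0 • EuclideanSpace.single (0 : Fin 2) (1:ℝ) + v 1 • EuclideanSpace.single (1 : Fin 2) (1:ℝ) := by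
    ext k; fin_cases k <;> simp
  rw [hv, map_add, map_smul, map_smul, h0, h1]
  simp

/-- affine function with given coefficients -/
def aff (c₀ c₁ c₂ : ℝ) (x : E2) : ℝ := c₀ + c₁ * x 0 + c₂ * x 1

lemma aff_contDiff (c₀ c₁ c₂ : ℝ) : ContDiff ℝ 2 (aff c₀ c₁ c₂) := by
  unfold aff; fun_prop

lemma aff_hasFDerivAt (c₀ c₁ c₂ : ℝ) (x : E2) :
    HasFDerivAt (aff c₀ c₁ c₂)
      (c₁ • (EuclideanSpace.proj 0 : E2 →L[ℝ] ℝ) + c₂ • (EuclideanSpace.proj 1 : E2 →L[ℝ] ℝ)) x := by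
  have h0 : HasFDerivAt (fun x : E2 => x 0) (EuclideanSpace.proj 0 : E2 →L[ℝ] ℝ) x :=
    (EuclideanSpace.proj 0 : E2 →L[ℝ] ℝ).hasFDerivAt
  have h1 : HasFDerivAt (fun x : E2 => x 1) (EuclideanSpace.proj 1 : E2 →L[ℝ] ℝ) x :=
    (EuclideanSpace.proj 1 : E2 →L[ℝ] ℝ).hasFDerivAt
  have := ((h0.const_mul c₁).const_add c₀).add (h1.const_mul c₂)
  exact this

lemma aff_pd (c₀ c₁ c₂ : ℝ) (i : Fin 2) : ∃ d : ℝ, ∀ x, pd i (aff c₀ c₁ c₂) x = d := by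
  refine ⟨(c₁ • (EuclideanSpace.proj 0 : E2 →L[ℝ] ℝ) + c₂ • (EuclideanSpace.proj 1 : E2 →L[ℝ] ℝ))
    (EuclideanSpace.single i 1), fun x => ?_⟩
  unfold pd
  rw [(aff_hasFDerivAt c₀ c₁ c₂ x).fderiv]

lemma integral_parts {f g : E2 → ℝ} (hf : ContDiff ℝ 1 f) (hg : ContDiff ℝ 1 g)
    (hc : HasCompactSupport g) (i : Fin 2) :
    ∫ x, f x * pd i g x = - ∫ x, pd i f x * g x := by
  have hf' : Continuous (pd i f) := (pd_contDiff (m := 0) hf (by norm_num) i).continuous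
  have hg' : Continuous (pd i g) := (pd_contDiff (m := 0) hg (by norm_num) i).continuous
  apply integral_mul_fderiv_eq_neg_fderiv_mul_of_integrable
  · exact (hf'.mul hg.continuous).integrable_of_hasCompactSupport hc.mul_left
  · exact (hf.continuous.mul hg').integrable_of_hasCompactSupport (pd_compact hc i).mul_left
  · exact (hf.continuous.mul hg.continuous).integrable_of_hasCompactSupport hc.mul_left
  · exact fun x _ => (hf.differentiable (by norm_num)) x
  · exact fun x _ => (hg.differentiable (by norm_num)) x

lemma integral_aff_pd_pd (c₀ c₁ c₂ : ℝ) {g : E2 → ℝ} (hg : ContDiff ℝ 2 g)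
    (hc : HasCompactSupport g) (i j : Fin 2) :
    ∫ x, aff c₀ c₁ c₂ x * pd i (pd j g) x = 0 := by
  rw [integral_parts ((aff_contDiff _ _ _).of_le (by norm_num)) (pd_contDiff hg (by norm_num) j) (pd_compact hc j)]
  obtain ⟨d, hd⟩ := aff_pd c₀ c₁ c₂ i
  simp_rw [hd]
  have hd0 : ∀ x, pd j (fun _ : E2 => d) x = 0 := by intro x; simp [pd]
  have := integral_parts (f := fun _ => d) contDiff_const (hg.of_le (by norm_num)) hc j
  rw [this]
  simp [hd0]

/-! ### Matrix fields -/

lemma tsupport_entry (W : E2 → Mat2) (i j : Fin 2) : tsupport (fun x => W x i j) ⊆ tsupport W := by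
  apply closure_mono
  intro x hx
  simp only [Function.mem_support] at hx ⊢
  intro h
  exact hx (by simp [h])

lemma div2_tsupport {W : E2 → Mat2} {x : E2} (hx : x ∉ tsupport W) : div2Mat W x = 0 := by
  have : ∀ i j k l : Fin 2, pd i (pd j (fun y => W y k l)) x = 0 := by
    intro i j k l
    apply image_eq_zero_of_notMem_tsupport
    exact fun h => hx (tsupport_entry W k l (pd_tsupport _ _ (pd_tsupport _ _ h)))
  simp [div2Mat, this]

lemma divMat_tsupport {W : E2 → Mat2} {x : E2} (hx : x ∉ tsupport W) : divMat W x = vec2 0 0 := by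
  have : ∀ j k l : Fin 2, (pd j (fun y => W y k l)) x = 0 := by
    intro j k l
    apply image_eq_zero_of_notMem_tsupport
    exact fun h => hx (tsupport_entry W k l (pd_tsupport _ _ h))
  simp [divMat, this]

lemma entry_compact {W : E2 → Mat2} (hW : HasCompactSupport W) (i j : Fin 2) :
    HasCompactSupport (fun x => W x i j) :=
  hW.of_isClosed_subset (isClosed_tsupport _) (tsupport_entry W i j)

/-! ### Affine functions are in the kernel -/

lemma affine_kernel {Ω : Set E2} (hΩ : IsOpen Ω) {u : E2 → ℝ} {c₀ c₁ c₂ : ℝ}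
    (h : ∀ᵐ x ∂(volume.restrict Ω), u x = c₀ + c₁ * x 0 + c₂ * x 1) {W : E2 → Mat2}
    (hW : Cc2Sym Ω W) : ∫ x in Ω, u x * div2Mat W x = 0 := by
  obtain ⟨hd, hc, hs, -⟩ := hW
  have e1 : ∫ x in Ω, u x * div2Mat W x = ∫ x in Ω, aff c₀ c₁ c₂ x * div2Mat W x := by
    apply integral_congr_ae
    filter_upwards [h] with x hx
    rw [hx]; rfl
  rw [e1, setIntegral_eq_integral_of_forall_compl_eq_zero
    (fun x hx => by rw [div2_tsupport (fun h => hx (hs h)), mul_zero])]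
  have I : ∀ i j k l : Fin 2, Integrable (fun x => aff c₀ c₁ c₂ x * pd i (pd j (fun y => W y k l)) x) := by
    intro i j k l
    have h1 : Continuous (pd i (pd j (fun y => W y k l))) :=
      (pd_contDiff (m := 0) (pd_contDiff (m := 1) (hd k l) (by norm_num) j) (by norm_num) i).continuous
    exact ((aff_contDiff _ _ _).continuous.mul h1).integrable_of_hasCompactSupport
      (pd_compact (pd_compact (entry_compact hc k l) j) i).mul_left
  have e2 : (fun x => aff c₀ c₁ c₂ x * div2Mat W x) = fun x =>
      (aff c₀ c₁ c₂ x * pd 0 (pd 0 (fun y => W y 0 0)) x +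
      aff c₀ c₁ c₂ x * pd 1 (pd 1 (fun y => W y 1 1)) x) +
      2 * (aff c₀ c₁ c₂ x * pd 0 (pd 1 (fun y => W y 0 1)) x) := by
    funext x; unfold div2Mat; ring
  rw [e2]
  refine (integral_add ((I 0 0 0 0).add (I 1 1 1 1)) ((I 0 1 0 1).const_mul 2)).trans ?_
  have e3 := integral_add (I 0 0 0 0) (I 1 1 1 1)
  have e4 := integral_const_mul (μ := (volume : Measure E2)) 2
    (fun x => aff c₀ c₁ c₂ x * pd 0 (pd 1 (fun y => W y 0 1)) x)
  rw [integral_aff_pd_pd _ _ _ (hd 0 1) (entry_compact hc 0 1)] at e4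
  rw [integral_aff_pd_pd _ _ _ (hd 0 0) (entry_compact hc 0 0),
    integral_aff_pd_pd _ _ _ (hd 1 1) (entry_compact hc 1 1)] at e3
  refine (congrArg₂ (· + ·) e3 e4).trans ?_
  norm_num

/-! ### Scaling into the admissible set -/

lemma ellip_ball {a : ℝ} (ha : 0 < a) (θ : ℝ) :
    ∃ δ > 0, ∀ p q : ℝ, |p| ≤ δ → |q| ≤ δ → vec2 p q ∈ Ellip a θ := by
  set K := 1 + 1 / a ^ 2 with hK
  have hKp : 1 ≤ K := by rw [hK]; have : 0 < 1 / a ^ 2 := by positivity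
                         linarith
  refine ⟨1 / (2 * K), by positivity, fun p q hp hq => ?_⟩
  set δ := 1 / (2 * K) with hδ
  have hδ0 : 0 < δ := by positivity
  have hp2 : p ^ 2 ≤ δ ^ 2 := by rw [← sq_abs p]; gcongr
  have hq2 : q ^ 2 ≤ δ ^ 2 := by rw [← sq_abs q]; gcongr
  show (p * Real.cos θ + q * Real.sin θ) ^ 2 + ((-p * Real.sin θ + q * Real.cos θ) / a) ^ 2 ≤ 1
  have hcs := Real.sin_sq_add_cos_sq θ
  have h1 : (p * Real.cos θ + q * Real.sin θ) ^ 2 ≤ p ^ 2 + q ^ 2 := by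
    have : p ^ 2 + q ^ 2 = (p ^ 2 + q ^ 2) * (Real.sin θ ^ 2 + Real.cos θ ^ 2) := by rw [hcs]; ring
    rw [this]
    nlinarith [sq_nonneg (-p * Real.sin θ + q * Real.cos θ)]
  have h2 : (-p * Real.sin θ + q * Real.cos θ) ^ 2 ≤ p ^ 2 + q ^ 2 := by
    have : p ^ 2 + q ^ 2 = (p ^ 2 + q ^ 2) * (Real.sin θ ^ 2 + Real.cos θ ^ 2) := by rw [hcs]; ring
    rw [this]
    nlinarith [sq_nonneg (p * Real.cos θ + q * Real.sin θ)]
  rw [div_pow]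
  calc _ ≤ (p ^ 2 + q ^ 2) + (p ^ 2 + q ^ 2) / a ^ 2 := by gcongr
    _ = K * (p ^ 2 + q ^ 2) := by rw [hK]; ring
    _ ≤ K * (2 * δ ^ 2) := by
      apply mul_le_mul_of_nonneg_left _ (by linarith); linarith
    _ = δ := by rw [hδ]; field_simp
    _ ≤ 1 := by rw [hδ, div_le_one (by positivity)]; linarith

lemma exists_bound {f : E2 → ℝ} (hf : Continuous f) (hc : HasCompactSupport f) :
    ∃ C, ∀ x, |f x| ≤ C := by
  obtain ⟨C, hC⟩ := hf.bounded_above_of_compact_support hc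
  exact ⟨C, fun x => hC x⟩

lemma smul_vec2 (c p q : ℝ) : c • vec2 p q = vec2 (c * p) (c * q) := by
  ext k; fin_cases k <;> simp [vec2]

lemma vec2_mem_smul {a θ l δ : ℝ} (hl : 0 < l)
    (hE : ∀ p q : ℝ, |p| ≤ δ → |q| ≤ δ → vec2 p q ∈ Ellip a θ) {p q : ℝ}
    (hp : |p| ≤ l * δ) (hq : |q| ≤ l * δ) : vec2 p q ∈ l • Ellip a θ := by
  refine ⟨vec2 (l⁻¹ * p) (l⁻¹ * q), hE _ _ ?_ ?_, ?_⟩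
  · rw [abs_mul, abs_of_pos (inv_pos.2 hl), inv_mul_le_iff₀ hl]; exact hp
  · rw [abs_mul, abs_of_pos (inv_pos.2 hl), inv_mul_le_iff₀ hl]; exact hq
  · simp only [smul_vec2]
    rw [mul_inv_cancel_left₀ hl.ne', mul_inv_cancel_left₀ hl.ne']

lemma mat_mem_smul {a θ l δ : ℝ} (hl : 0 < l)
    (hE : ∀ p q : ℝ, |p| ≤ δ → |q| ≤ δ → vec2 p q ∈ Ellip a θ) {V : Mat2} (hs : V.IsSymm)
    (hV : ∀ i j, |V i j| ≤ l * δ) : V ∈ l • EllipM a θ := by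
  have hb : ∀ i j, |(l⁻¹ • V) i j| ≤ δ := by
    intro i j
    rw [Matrix.smul_apply, smul_eq_mul, abs_mul, abs_of_pos (inv_pos.2 hl), inv_mul_le_iff₀ hl]
    exact hV i j
  refine ⟨l⁻¹ • V, ⟨hs.smul _, fun i => hE _ _ (hb _ _) (hb _ _), fun i => hE _ _ (hb _ _) (hb _ _)⟩, ?_⟩
  simp [smul_smul, hl.ne']

lemma cc2_smul {Ω : Set E2} {W : E2 → Mat2} (hW : Cc2Sym Ω W) (c : ℝ) :
    Cc2Sym Ω (fun x => c • W x) := by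
  obtain ⟨hd, hc, hs, hsym⟩ := hW
  have ht : tsupport (fun x => c • W x) ⊆ tsupport W := by
    apply closure_mono
    intro x hx h
    exact hx (by simp [h])
  refine ⟨fun i j => ?_, hc.of_isClosed_subset (isClosed_tsupport _) ht, ht.trans hs,
    fun x => (hsym x).smul c⟩
  simpa using contDiff_const.mul (hd i j)

lemma div2_smul (W : E2 → Mat2) (c : ℝ) (x : E2) :
    div2Mat (fun x => c • W x) x = c * div2Mat W x := by
  unfold div2Mat
  simp only [Matrix.smul_apply, smul_eq_mul, pd_const_mul]
  ring

lemma divMat_smul (W : E2 → Mat2) (c : ℝ) (x : E2) :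
    divMat (fun x => c • W x) x = vec2
      (c * (pd 0 (fun y => W y 0 0) x + pd 1 (fun y => W y 0 1) x))
      (c * (pd 0 (fun y => W y 1 0) x + pd 1 (fun y => W y 1 1) x)) := by
  unfold divMat
  simp only [Matrix.smul_apply, smul_eq_mul, pd_const_mul, mul_add]

lemma integral_le_zero {Ω : Set E2} {a θ l0 l1 : ℝ} (ha : 0 < a) (hl0 : 0 < l0) (hl1 : 0 < l1)
    {u : E2 → ℝ} (h : DTGV2 Ω a θ l0 l1 u = 0) {W : E2 → Mat2} (hW : Cc2Sym Ω W) :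
    ∫ x in Ω, u x * div2Mat W x ≤ 0 := by
  obtain ⟨δ, hδ, hE⟩ := ellip_ball ha θ
  have b1 : ∀ i j, ∃ C, ∀ x, |W x i j| ≤ C := fun i j =>
    exists_bound (hW.1 i j).continuous (entry_compact hW.2.1 i j)
  have b2 : ∀ i j k, ∃ C, ∀ x, |pd k (fun y => W y i j) x| ≤ C := fun i j k =>
    exists_bound (pd_contDiff (m := 1) (hW.1 i j) (by norm_num) k).continuous
      (pd_compact (entry_compact hW.2.1 i j) k)
  choose C1 hC1 using b1
  choose C2 hC2 using b2
  have C1n : ∀ i j, 0 ≤ C1 i j := fun i j => (abs_nonneg _).trans (hC1 i j 0)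
  have C2n : ∀ i j k, 0 ≤ C2 i j k := fun i j k => (abs_nonneg _).trans (hC2 i j k 0)
  set M := (∑ i, ∑ j, C1 i j) + ∑ i, ∑ j, ∑ k, C2 i j k + 1 with hM
  have hMpos : 0 < M := by
    have : 0 ≤ ∑ i, ∑ j, C1 i j := Finset.sum_nonneg fun i _ => Finset.sum_nonneg fun j _ => C1n i j
    have : 0 ≤ ∑ i, ∑ j, ∑ k, C2 i j k := Finset.sum_nonneg fun i _ =>
      Finset.sum_nonneg fun j _ => Finset.sum_nonneg fun k _ => C2n i j k
    linarith
  simp only [Fin.sum_univ_two] at hM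
  have B1 : ∀ x i j, |W x i j| ≤ M := by
    intro x i j
    refine (hC1 i j x).trans ?_
    have := C1n 0 0; have := C1n 0 1; have := C1n 1 0; have := C1n 1 1
    have := C2n 0 0 0; have := C2n 0 1 0; have := C2n 1 0 0; have := C2n 1 1 0
    have := C2n 0 0 1; have := C2n 0 1 1; have := C2n 1 0 1; have := C2n 1 1 1
    fin_cases i <;> fin_cases j <;> simp <;> linarith
  have B2 : ∀ x i, |pd 0 (fun y => W y i 0) x + pd 1 (fun y => W y i 1) x| ≤ M := by
    intro x i
    refine (abs_add_le _ _).trans ((add_le_add (hC2 i 0 0 x) (hC2 i 1 1 x)).trans ?_)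
    have := C1n 0 0; have := C1n 0 1; have := C1n 1 0; have := C1n 1 1
    have := C2n 0 0 0; have := C2n 0 1 0; have := C2n 1 0 0; have := C2n 1 1 0
    have := C2n 0 0 1; have := C2n 0 1 1; have := C2n 1 0 1; have := C2n 1 1 1
    fin_cases i <;> simp <;> linarith
  set ε := min l0 l1 * δ / M with hε
  have hmin : 0 < min l0 l1 := lt_min hl0 hl1
  have hεp : 0 < ε := by positivity
  have hεM : ε * M = min l0 l1 * δ := by rw [hε]; field_simp
  have S : ∀ r : ℝ, |r| ≤ M → |ε * r| ≤ l0 * δ ∧ |ε * r| ≤ l1 * δ := by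
    intro r hr
    have : |ε * r| ≤ min l0 l1 * δ := by
      rw [abs_mul, abs_of_pos hεp, ← hεM]; gcongr
    exact ⟨this.trans (by gcongr; exact min_le_left _ _), this.trans (by gcongr; exact min_le_right _ _)⟩
  have hW' := cc2_smul hW ε
  unfold DTGV2 at h
  simp only [ENNReal.iSup_eq_zero] at h
  have := h (fun x => ε • W x) ⟨hW', fun x _ => ?_, fun x _ => ?_⟩
  · rw [ENNReal.ofReal_eq_zero] at this
    simp only [div2_smul] at this
    have e : (fun x => u x * (ε * div2Mat W x)) = fun x => ε * (u x * div2Mat W x) := by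
      funext x; ring
    rw [e, integral_const_mul] at this
    exact nonpos_of_mul_nonpos_right this hεp
  · exact mat_mem_smul hl0 hE (hW'.2.2.2 x) (fun i j => (S _ (B1 x i j)).1)
  · rw [divMat_smul]
    exact vec2_mem_smul hl1 hE (S _ (B2 x 0)).2 (S _ (B2 x 1)).2

lemma integral_eq_zero' {Ω : Set E2} {a θ l0 l1 : ℝ} (ha : 0 < a) (hl0 : 0 < l0) (hl1 : 0 < l1)
    {u : E2 → ℝ} (h : DTGV2 Ω a θ l0 l1 u = 0) {W : E2 → Mat2} (hW : Cc2Sym Ω W) :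
    ∫ x in Ω, u x * div2Mat W x = 0 := by
  refine le_antisymm (integral_le_zero ha hl0 hl1 h hW) ?_
  have := integral_le_zero ha hl0 hl1 h (cc2_smul hW (-1))
  simp only [div2_smul] at this
  have e : (fun x => u x * (-1 * div2Mat W x)) = fun x => -(u x * div2Mat W x) := by
    funext x; ring
  rw [e, integral_neg] at this
  linarith

lemma test_pd {Ω : Set E2} {a θ l0 l1 : ℝ} (ha : 0 < a) (hl0 : 0 < l0) (hl1 : 0 < l1)
    {u : E2 → ℝ} (h : DTGV2 Ω a θ l0 l1 u = 0) {g : E2 → ℝ} (hg : ContDiff ℝ 2 g)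
    (hc : HasCompactSupport g) (hs : tsupport g ⊆ Ω) (i j : Fin 2) :
    ∫ x in Ω, u x * pd i (pd j g) x = 0 := by
  have key : ∀ A : Mat2, A.IsSymm → Cc2Sym Ω (fun x => g x • A) := by
    intro A hA
    have ht : tsupport (fun x => g x • A) ⊆ tsupport g := by
      apply closure_mono
      intro x hx h
      exact hx (by simp [h])
    refine ⟨fun i j => ?_, hc.of_isClosed_subset (isClosed_tsupport _) ht, ht.trans hs,
      fun x => hA.smul _⟩
    simpa using hg.mul contDiff_const
  have z : ∀ k : Fin 2, pd k (fun _ : E2 => (0:ℝ)) = fun _ => 0 := by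
    intro k; funext x; simp [pd]
  have h00 := integral_eq_zero' ha hl0 hl1 h (key !![1, 0; 0, 0] (by ext i j; fin_cases i <;> fin_cases j <;> rfl))
  have h11 := integral_eq_zero' ha hl0 hl1 h (key !![0, 0; 0, 1] (by ext i j; fin_cases i <;> fin_cases j <;> rfl))
  have h01 := integral_eq_zero' ha hl0 hl1 h (key !![0, 1; 1, 0] (by ext i j; fin_cases i <;> fin_cases j <;> rfl))
  simp [div2Mat, z] at h00 h11 h01
  have e : (fun x => u x * (2 * pd 0 (pd 1 g) x)) = fun x => 2 * (u x * pd 0 (pd 1 g) x) := by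
    funext x; ring
  rw [e, integral_const_mul] at h01
  have h01' : ∫ x in Ω, u x * pd 0 (pd 1 g) x = 0 := by linarith
  fin_cases i <;> fin_cases j
  · exact h00
  · exact h01'
  · show ∫ x in Ω, u x * pd 1 (pd 0 g) x = 0
    rw [pd_comm hg 1 0]; exact h01'
  · exact h11

/-! ### Mollification -/

/-- the mollification of `v` by `g` -/
def cv (v g : E2 → ℝ) (x : E2) : ℝ := ∫ t, v t * g (x - t)

lemma cv_hasFDerivAt {v g : E2 → ℝ} (hv : LocallyIntegrable v) (hg : ContDiff ℝ 1 g)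
    (hc : HasCompactSupport g) (x : E2) :
    DifferentiableAt ℝ (cv v g) x ∧ ∀ i, pd i (cv v g) x = cv v (pd i g) x := by
  have h : HasFDerivAt (cv v g) _ x :=
    hc.hasFDerivAt_convolution_right (ContinuousLinearMap.mul ℝ ℝ) hv hg x
  refine ⟨h.differentiableAt, fun i => ?_⟩
  unfold pd
  rw [h.fderiv, convolution_precompR_apply _ hv (hc.fderiv ℝ) (hg.continuous_fderiv one_ne_zero)]
  rfl

lemma cv_affine {Ω : Set E2} (hΩ : IsOpen Ω) {u : E2 → ℝ} (hu : IntegrableOn u Ω)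
    (H : ∀ g : E2 → ℝ, ContDiff ℝ 2 g → HasCompactSupport g → tsupport g ⊆ Ω → ∀ i j : Fin 2,
      ∫ x in Ω, u x * pd i (pd j g) x = 0)
    {g : E2 → ℝ} (hg : ContDiff ℝ 2 g) (hc : HasCompactSupport g) {ε r : ℝ} {x₀ : E2} 
    (hr : 0 < r) (hs : tsupport g ⊆ Metric.closedBall 0 ε) (hb : Metric.ball x₀ (r + ε) ⊆ Ω) :
    ∃ c₀ c₁ c₂ : ℝ, ∀ x ∈ Metric.ball x₀ r, cv (Ω.indicator u) g x = aff c₀ c₁ c₂ x := by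
  set v := Ω.indicator u with hv
  have hvi : LocallyIntegrable v := ((integrable_indicator_iff hΩ.measurableSet).2 hu).locallyIntegrable
  have hg1 : ContDiff ℝ 1 g := hg.of_le (by norm_num)
  have hpg : ∀ i, ContDiff ℝ 1 (pd i g) := fun i => pd_contDiff hg (by norm_num) i
  have e1 : ∀ i, pd i (cv v g) = cv v (pd i g) := fun i => funext fun x =>
    (cv_hasFDerivAt hvi hg1 hc x).2 i
  have e2 : ∀ i j, ∀ x ∈ Metric.ball x₀ r, pd i (cv v (pd j g)) x = 0 := by
    intro i j x hx
    rw [(cv_hasFDerivAt hvi (hpg j) (pd_compact hc j) x).2 i]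
    have hgx : ContDiff ℝ 2 (fun t => g (x - t)) := hg.comp (contDiff_const.sub contDiff_id)
    have hsub : tsupport (fun t => g (x - t)) ⊆ Metric.closedBall x ε := by
      apply closure_minimal _ Metric.isClosed_closedBall
      intro t ht
      have := hs (subset_tsupport g (show x - t ∈ Function.support g from ht))
      rw [mem_closedBall_zero_iff] at this
      rw [Metric.mem_closedBall, dist_comm, dist_eq_norm]
      exact this
    have hT := H (fun t => g (x - t)) hgx
      ((isCompact_closedBall x ε).of_isClosed_subset (isClosed_tsupport _) hsub)
      (hsub.trans ((Metric.closedBall_subset_ball' (by rw [Metric.mem_ball] at hx; linarith)).trans hb)) i j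
    rw [pd_sub_left (hg.differentiable (by norm_num)) x j, pd_const_mul,
      pd_sub_left ((hpg j).differentiable (by norm_num)) x i] at hT
    unfold cv
    rw [← hT, ← integral_indicator hΩ.measurableSet]
    congr 1
    funext t
    by_cases ht : t ∈ Ω <;> simp [hv, ht]
  have hconn : IsPreconnected (Metric.ball x₀ r) := (convex_ball x₀ r).isPreconnected
  have e3 : ∀ j, ∃ d, ∀ x ∈ Metric.ball x₀ r, cv v (pd j g) x = d := by
    intro j
    refine Metric.isOpen_ball.exists_is_const_of_fderiv_eq_zero (𝕜 := ℝ) hconn ?_ ?_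
    · exact fun x _ => (cv_hasFDerivAt hvi (hpg j) (pd_compact hc j) x).1.differentiableWithinAt
    · exact fun x hx => fderiv_eq_zero_of_pd fun i => e2 i j x hx
  choose d hd using e3
  have e4 : ∃ c, ∀ x ∈ Metric.ball x₀ r, cv v g x - aff 0 (d 0) (d 1) x = c := by
    have hF : ∀ x, HasFDerivAt (fun x => cv v g x - aff 0 (d 0) (d 1) x) _ x := fun x =>
      ((cv_hasFDerivAt hvi hg1 hc x).1.hasFDerivAt).sub (aff_hasFDerivAt 0 (d 0) (d 1) x)
    refine Metric.isOpen_ball.exists_is_const_of_fderiv_eq_zero (𝕜 := ℝ) hconn ?_ ?_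
    · exact fun x _ => (hF x).differentiableAt.differentiableWithinAt
    · intro x hx
      apply fderiv_eq_zero_of_pd
      intro i
      unfold pd
      rw [(hF x).fderiv]
      have h1 : fderiv ℝ (cv v g) x (EuclideanSpace.single i 1) = d i := by
        rw [← hd i x hx, ← e1 i]; rfl
      rw [ContinuousLinearMap.sub_apply, h1]
      fin_cases i <;> simp
  obtain ⟨c, hcc⟩ := e4
  refine ⟨c, d 0, d 1, fun x hx => ?_⟩
  have := hcc x hx
  unfold aff at *
  linarith

/-- The set of convergence of a sequence of affine functions. -/
def convSet (c₀ c₁ c₂ : ℕ → ℝ) : AffineSubspace ℝ E2 where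
  carrier := {x | ∃ l, Tendsto (fun n => aff (c₀ n) (c₁ n) (c₂ n) x) atTop (𝓝 l)}
  smul_vsub_vadd_mem' := by
    rintro c p q r ⟨l₁, h₁⟩ ⟨l₂, h₂⟩ ⟨l₃, h₃⟩
    refine ⟨c * (l₁ - l₂) + l₃, ?_⟩
    refine (((h₁.sub h₂).const_mul c).add h₃).congr fun n => ?_
    simp [aff]
    ring

lemma aff_limit {c₀ c₁ c₂ : ℕ → ℝ} {u : E2 → ℝ} {s : Set E2} (hs : volume s ≠ 0)
    (h : ∀ᵐ x, x ∈ s → Tendsto (fun n => aff (c₀ n) (c₁ n) (c₂ n) x) atTop (𝓝 (u x))) :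
    ∃ d₀ d₁ d₂ : ℝ, ∀ᵐ x, x ∈ s → u x = aff d₀ d₁ d₂ x := by
  have htop : convSet c₀ c₁ c₂ = ⊤ := by
    by_contra hne
    have h0 := Measure.addHaar_affineSubspace volume _ hne
    apply hs
    have h1 : ∀ᵐ x : E2, x ∉ (convSet c₀ c₁ c₂ : Set E2) := measure_eq_zero_iff_ae_notMem.1 h0
    apply measure_eq_zero_iff_ae_notMem.2
    filter_upwards [h, h1] with x hx hx1 hxs
    exact hx1 ⟨_, hx hxs⟩
  have hall : ∀ x, ∃ l, Tendsto (fun n => aff (c₀ n) (c₁ n) (c₂ n) x) atTop (𝓝 l) := by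
    intro x
    have : x ∈ convSet c₀ c₁ c₂ := by rw [htop]; trivial
    exact this
  obtain ⟨l₀, h₀⟩ := hall 0
  obtain ⟨l₁, h₁⟩ := hall (EuclideanSpace.single 0 1)
  obtain ⟨l₂, h₂⟩ := hall (EuclideanSpace.single 1 1)
  have t₀ : Tendsto c₀ atTop (𝓝 l₀) := h₀.congr fun n => by simp [aff]
  have t₁ : Tendsto c₁ atTop (𝓝 (l₁ - l₀)) := (h₁.sub h₀).congr fun n => by simp [aff]
  have t₂ : Tendsto c₂ atTop (𝓝 (l₂ - l₀)) := (h₂.sub h₀).congr fun n => by simp [aff]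
  refine ⟨l₀, l₁ - l₀, l₂ - l₀, ?_⟩
  filter_upwards [h] with x hx hxs
  exact tendsto_nhds_unique (hx hxs) ((t₀.add (t₁.mul_const _)).add (t₂.mul_const _))

lemma local_affine {Ω : Set E2} (hΩ : IsOpen Ω) {u : E2 → ℝ} (hu : IntegrableOn u Ω)
    (H : ∀ g : E2 → ℝ, ContDiff ℝ 2 g → HasCompactSupport g → tsupport g ⊆ Ω → ∀ i j : Fin 2,
      ∫ x in Ω, u x * pd i (pd j g) x = 0) {x₀ : E2} (hx₀ : x₀ ∈ Ω) :
    ∃ r > 0, Metric.ball x₀ r ⊆ Ω ∧ ∃ c₀ c₁ c₂ : ℝ, ∀ᵐ x, x ∈ Metric.ball x₀ r → u x = aff c₀ c₁ c₂ x := by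
  obtain ⟨R, hR, hRΩ⟩ := Metric.isOpen_iff.1 hΩ x₀ hx₀
  set r := R / 2 with hr
  have hr0 : 0 < r := by positivity
  have hbΩ : Metric.ball x₀ r ⊆ Ω := (Metric.ball_subset_ball (by linarith)).trans hRΩ
  refine ⟨r, hr0, hbΩ, ?_⟩
  set v := Ω.indicator u with hv
  have hvi : LocallyIntegrable v := ((integrable_indicator_iff hΩ.measurableSet).2 hu).locallyIntegrable
  let φ : ℕ → ContDiffBump (0 : E2) := fun n =>
    ⟨r / (n + 1) / 2, r / (n + 1), by positivity, half_lt_self (by positivity)⟩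
  have hφ : Tendsto (fun n => (φ n).rOut) atTop (𝓝 0) := by
    show Tendsto (fun n : ℕ => r / ((n : ℝ) + 1)) atTop (𝓝 0)
    simpa [div_eq_mul_inv] using (tendsto_one_div_add_atTop_nhds_zero_nat (𝕜 := ℝ)).const_mul r
  have hcv := ContDiffBump.ae_convolution_tendsto_right_of_locallyIntegrable (μ := volume) (K := 2) hφ
    (Eventually.of_forall fun n => by
      show r / ((n : ℝ) + 1) ≤ 2 * (r / (n + 1) / 2)
      linarith) hvi
  have hA : ∀ n, ∃ c₀ c₁ c₂ : ℝ, ∀ x ∈ Metric.ball x₀ r,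
      cv v ((φ n).normed volume) x = aff c₀ c₁ c₂ x := by
    intro n
    refine cv_affine hΩ hu H (ε := (φ n).rOut) ((φ n).contDiff_normed (n := 2)) (φ n).hasCompactSupport_normed hr0 ?_ ?_
    · rw [(φ n).tsupport_normed_eq]
    · refine (Metric.ball_subset_ball ?_).trans hRΩ
      have : (φ n).rOut ≤ r := by
        show r / ((n : ℝ) + 1) ≤ r
        apply div_le_self hr0.le
        linarith [(Nat.cast_nonneg n : (0:ℝ) ≤ n)]
      linarith
  choose c₀ c₁ c₂ hc using hA
  refine aff_limit (c₀ := c₀) (c₁ := c₁) (c₂ := c₂) (Metric.measure_ball_pos volume x₀ hr0).ne' ?_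
  filter_upwards [hcv] with x hx hxb
  have hvx : v x = u x := by rw [hv, Set.indicator_of_mem (hbΩ hxb)]
  rw [hvx] at hx
  refine hx.congr fun n => ?_
  rw [← hc n x hxb, convolution_lsmul_swap]
  unfold cv
  simp only [smul_eq_mul, mul_comm]

lemma aff_unique {c₀ c₁ c₂ d₀ d₁ d₂ : ℝ} {s : Set E2} (hs : IsOpen s) (hne : s.Nonempty)
    (h : ∀ᵐ x, x ∈ s → aff c₀ c₁ c₂ x = aff d₀ d₁ d₂ x) : aff c₀ c₁ c₂ = aff d₀ d₁ d₂ := by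
  have h0 : Tendsto (fun _ : ℕ => (0:ℝ)) atTop (𝓝 0) := tendsto_const_nhds
  let A : AffineSubspace ℝ E2 :=
    { carrier := {x | aff c₀ c₁ c₂ x = aff d₀ d₁ d₂ x}
      smul_vsub_vadd_mem' := by
        intro c p q r hp hq hr
        simp only [Set.mem_setOf_eq, aff] at hp hq hr ⊢
        simp
        linear_combination c * hp - c * hq + hr }
  have hA : A = ⊤ := by
    by_contra hn
    have hz := Measure.addHaar_affineSubspace volume _ hn
    have h1 : ∀ᵐ x : E2, x ∉ (A : Set E2) := measure_eq_zero_iff_ae_notMem.1 hz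
    apply (hs.measure_pos volume hne).ne'
    apply measure_eq_zero_iff_ae_notMem.2
    filter_upwards [h, h1] with x hx hx1 hxs
    exact hx1 (hx hxs)
  funext x
  have : x ∈ A := by rw [hA]; trivial
  exact this

lemma global_affine {Ω : Set E2} (hΩ : IsOpen Ω) (hc : IsConnected Ω) {u : E2 → ℝ}
    (H : ∀ x₀ ∈ Ω, ∃ r > 0, Metric.ball x₀ r ⊆ Ω ∧
      ∃ c₀ c₁ c₂ : ℝ, ∀ᵐ x, x ∈ Metric.ball x₀ r → u x = aff c₀ c₁ c₂ x) :
    ∃ c₀ c₁ c₂ : ℝ, ∀ᵐ x ∂(volume.restrict Ω), u x = c₀ + c₁ * x 0 + c₂ * x 1 := by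
  obtain ⟨x₀, hx₀⟩ := hc.nonempty
  obtain ⟨r₀, hr₀, hb₀, c₀, c₁, c₂, h₀⟩ := H x₀ hx₀
  refine ⟨c₀, c₁, c₂, ?_⟩
  let S : Set E2 := {y | ∃ s, IsOpen s ∧ y ∈ s ∧ ∀ᵐ x, x ∈ s → u x = aff c₀ c₁ c₂ x}
  let T : Set E2 := {y | ∃ s, IsOpen s ∧ y ∈ s ∧ ∃ d₀ d₁ d₂ : ℝ, aff d₀ d₁ d₂ ≠ aff c₀ c₁ c₂ ∧
    ∀ᵐ x, x ∈ s → u x = aff d₀ d₁ d₂ x}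
  have hS : IsOpen S := isOpen_iff_forall_mem_open.2 fun y ⟨s, hs, hy, h⟩ =>
    ⟨s, fun z hz => ⟨s, hs, hz, h⟩, hs, hy⟩
  have hT : IsOpen T := isOpen_iff_forall_mem_open.2 fun y ⟨s, hs, hy, h⟩ =>
    ⟨s, fun z hz => ⟨s, hs, hz, h⟩, hs, hy⟩
  have hcov : Ω ⊆ S ∪ T := by
    intro y hy
    obtain ⟨r, hr, -, d₀, d₁, d₂, hd⟩ := H y hy
    by_cases he : aff d₀ d₁ d₂ = aff c₀ c₁ c₂
    · exact Or.inl ⟨_, Metric.isOpen_ball, Metric.mem_ball_self hr, by rw [← he]; exact hd⟩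
    · exact Or.inr ⟨_, Metric.isOpen_ball, Metric.mem_ball_self hr, d₀, d₁, d₂, he, hd⟩
  have hdisj : ∀ y ∈ S, y ∉ T := by
    rintro y ⟨s, hs, hy, h⟩ ⟨t, ht, hyt, d₀, d₁, d₂, hne, hd⟩
    apply hne
    apply aff_unique (hs.inter ht) ⟨y, hy, hyt⟩
    filter_upwards [h, hd] with x h1 h2 hx
    rw [← h1 hx.1, ← h2 hx.2]
  have hx₀S : x₀ ∈ S := ⟨_, Metric.isOpen_ball, Metric.mem_ball_self hr₀, h₀⟩
  have hsub : Ω ⊆ S := by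
    intro y hy
    by_contra hyS
    have hyT : y ∈ T := (hcov hy).resolve_left hyS
    obtain ⟨z, -, hzS, hzT⟩ := hc.isPreconnected S T hS hT hcov ⟨x₀, hx₀, hx₀S⟩ ⟨y, hy, hyT⟩
    exact hdisj z hzS hzT
  rw [ae_restrict_iff' hΩ.measurableSet, ae_iff]
  apply measure_null_of_locally_null
  intro y hy
  have hyΩ : y ∈ Ω := by by_contra hn; exact hy fun h => absurd h hn
  obtain ⟨s, hs, hys, h⟩ := hsub hyΩ
  refine ⟨s ∩ {x | ¬ (x ∈ s → u x = aff c₀ c₁ c₂ x)}, ?_, measure_mono_null Set.inter_subset_right h⟩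
  filter_upwards [mem_nhdsWithin_of_mem_nhds (hs.mem_nhds hys), self_mem_nhdsWithin] with x hx hx2
  exact ⟨hx, fun hq => hx2 fun _ => hq hx⟩

/-- the kernel of `DTGV²_λ` consists of the affine functions. -/
theorem dtgv2_eq_zero_iff_affine (Ω : Set E2) (hΩo : IsOpen Ω)
    (hΩc : IsConnected Ω) (hΩb : Bornology.IsBounded Ω)
    (a θ l0 l1 : ℝ) (ha : 0 < a) (ha1 : a ≤ 1) (hl0 : 0 < l0) (hl1 : 0 < l1)
    (u : E2 → ℝ) (hu : IntegrableOn u Ω) :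
    DTGV2 Ω a θ l0 l1 u = 0 ↔
      ∃ c₀ c₁ c₂ : ℝ, ∀ᵐ x ∂(volume.restrict Ω), u x = c₀ + c₁ * x 0 + c₂ * x 1 := by

  constructor
  · intro h
    apply global_affine hΩo hΩc
    intro x₀ hx₀
    exact local_affine hΩo hu (fun g hg hc hs i j => test_pd ha hl0 hl1 h hg hc hs i j) hx₀
  · rintro ⟨c₀, c₁, c₂, h⟩
    unfold DTGV2
    simp only [ENNReal.iSup_eq_zero]
    intro W hW
    rw [affine_kernel hΩo h hW.1, ENNReal.ofReal_zero]
end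
end
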